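/- arXiv:1805.06728 — 4 statements merged into one kernel-verified Lean document; each statement's English description precedes it below -/
import Mathlib

section
/- There exists n₀ > 0 such that for all natural numbers n ≥ n₀ and all real numbers c with 0 < c < n/7, one has (n − c)·(1 − (1 − 1/n)^{c/2}) > c/3. -/
open Real

/-!
Two applications of `1 + t ≤ exp t` give `(1 - x) ^ p ≤ exp (-(p * x)) ≤ 1 / (1 + p * x)`. With
`x = 1 / n` and `p = c / 2` this reads `1 - (1 - 1 / n) ^ (c / 2) ≥ c / (2 * n + c)`, and
`(n - c) * (c / (2 * n + c))` exceeds `c / 3` exactly when `4 * c < n`.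
-/

theorem one_sub_rpow_le_exp_neg_mul {x p : ℝ} (hx : x ≤ 1) (hp : 0 ≤ p) :
    (1 - x) ^ p ≤ exp (-(p * x)) :=
  calc (1 - x) ^ p ≤ exp (-x) ^ p := rpow_le_rpow (sub_nonneg.2 hx) (one_sub_le_exp_neg x) hp
    _ = exp (-(p * x)) := by rw [← exp_mul, neg_mul, mul_comm]

theorem exp_neg_le_inv_one_add {t : ℝ} (ht : -1 < t) : exp (-t) ≤ (1 + t)⁻¹ := by
  rw [exp_neg, add_comm]
  exact inv_anti₀ (by linarith) (add_one_le_exp t)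

theorem mul_div_one_add_mul_le_one_sub_one_sub_rpow {x p : ℝ} (hx : x ≤ 1) (hp : 0 ≤ p)
    (hpx : -1 < p * x) : p * x / (1 + p * x) ≤ 1 - (1 - x) ^ p := by
  have hne : 1 + p * x ≠ 0 := by linarith
  have hpow : (1 - x) ^ p ≤ (1 + p * x)⁻¹ :=
    (one_sub_rpow_le_exp_neg_mul hx hp).trans (exp_neg_le_inv_one_add hpx)
  calc p * x / (1 + p * x) = 1 - (1 + p * x)⁻¹ := by field_simp; ring
    _ ≤ 1 - (1 - x) ^ p := sub_le_sub_left hpow 1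

theorem div_three_lt_sub_mul_div_two_mul_add {K : Type*} [Field K] [LinearOrder K]
    [IsStrictOrderedRing K] {n c : K} (hc : 0 < c) (hcn : 4 * c < n) :
    c / 3 < (n - c) * (c / (2 * n + c)) := by
  rw [mul_div_assoc', div_lt_div_iff₀ three_pos (by linarith)]
  calc c * (2 * n + c) < c * (3 * (n - c)) := mul_lt_mul_of_pos_left (by linarith) hc
    _ = (n - c) * c * 3 := by ring

theorem stmt_0_general {n c : ℝ} (hn : 1 ≤ n) (hc : 0 < c) (hcn : c < n / 4) :
    c / 3 < (n - c) * (1 - (1 - 1 / n) ^ (c / 2)) := by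
  have hn_pos : 0 < n := by linarith
  have hfrac : c / (2 * n + c) ≤ 1 - (1 - 1 / n) ^ (c / 2) :=
    calc c / (2 * n + c) = c / 2 * (1 / n) / (1 + c / 2 * (1 / n)) := by field_simp
      _ ≤ 1 - (1 - 1 / n) ^ (c / 2) :=
        mul_div_one_add_mul_le_one_sub_one_sub_rpow ((div_le_one hn_pos).2 hn) (by positivity)
          (neg_one_lt_zero.trans (by positivity))
  calc c / 3 < (n - c) * (c / (2 * n + c)) :=
        div_three_lt_sub_mul_div_two_mul_add hc (by linarith)
    _ ≤ (n - c) * (1 - (1 - 1 / n) ^ (c / 2)) :=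
        mul_le_mul_of_nonneg_left hfrac (by linarith)

theorem stmt_0 :
    ∃ n₀ : ℕ, 0 < n₀ ∧ ∀ n : ℕ, n₀ ≤ n → ∀ c : ℝ, 0 < c → c < (n : ℝ) / 7 →
      ((n : ℝ) - c) * (1 - (1 - 1 / (n : ℝ)) ^ (c / 2)) > c / 3 :=
  ⟨1, one_pos, fun _ hn _ hc hcn => stmt_0_general (mod_cast hn) hc (by linarith)⟩
end

section
/- Let γ > 0 and α, β > 1 be real constants, and for each natural number n ≥ 2 let q_n be a real number with log n/(γ·n) ≤ q_n ≤ 1. Then lim_{n→∞} (1 − (1 − q_n)^{n − β·log n})^{α·log n} = 1. -/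
open Real Filter

/-!
Write `m = t - β log t`. Since `m` is eventually at least `t / 2`, the bound `1 - q ≤ exp (-q)`
turns `log t / (γ t) ≤ q` into `(1 - q) ^ m ≤ t ^ (-1 / (2 γ))`. A negative power beats the
logarithm, so `(1 - q) ^ m * log t → 0`, and `(1 - x) ^ p → 1` as soon as `x → 0` and `p x → 0`.
-/

theorem one_sub_rpow_le_exp_neg_mul_s1 {q m : ℝ} (hq : q ≤ 1) (hm : 0 ≤ m) :
    (1 - q) ^ m ≤ exp (-q * m) := by
  rw [exp_mul]
  exact rpow_le_rpow (sub_nonneg.2 hq) (one_sub_le_exp_neg q) hm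

theorem one_sub_rpow_le_rpow_neg_div {γ c t q m : ℝ} (hγ : 0 < γ) (hc : 0 ≤ c) (ht : 1 ≤ t)
    (hq : log t / (γ * t) ≤ q) (hq_le_one : q ≤ 1) (hm : c * t ≤ m) :
    (1 - q) ^ m ≤ t ^ (-(c / γ)) := by
  have t_pos : 0 < t := one_pos.trans_le ht
  have log_nonneg : 0 ≤ log t := Real.log_nonneg ht
  have q_nonneg : 0 ≤ q := le_trans (by positivity) hq
  have log_mul_le : log t * (c / γ) ≤ q * m :=
    calc log t * (c / γ) = log t / (γ * t) * (c * t) := by field_simp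
      _ ≤ q * m := by gcongr
  calc (1 - q) ^ m ≤ exp (-q * m) :=
        one_sub_rpow_le_exp_neg_mul_s1 hq_le_one (le_trans (by positivity) hm)
    _ ≤ exp (log t * -(c / γ)) := exp_le_exp.2 (by linarith)
    _ = t ^ (-(c / γ)) := (rpow_def_of_pos t_pos _).symm

section Limits

variable {ι : Type*} {l : Filter ι}

theorem tendsto_one_sub_rpow_nhds_one {x p : ι → ℝ} (hx : Tendsto x l (nhds 0))
    (hpx : Tendsto (fun i => p i * x i) l (nhds 0)) :
    Tendsto (fun i => (1 - x i) ^ p i) l (nhds 1) := by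
  have log_isBigO : (fun i => log (1 - x i)) =O[l] x := by
    have log_hasDerivAt : HasDerivAt (fun y : ℝ => log (1 - y)) (-1) 0 := by
      simpa using ((hasDerivAt_id (0 : ℝ)).const_sub 1).log (by simp)
    simpa [Function.comp_def] using log_hasDerivAt.isBigO_sub.comp_tendsto hx
  have exponent_tendsto : Tendsto (fun i => log (1 - x i) * p i) l (nhds 0) := by
    refine (log_isBigO.mul (Asymptotics.isBigO_refl p l)).trans_tendsto ?_
    simpa only [mul_comm] using hpx
  have exp_tendsto : Tendsto (fun i => exp (log (1 - x i) * p i)) l (nhds 1) := by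
    simpa only [exp_zero] using exponent_tendsto.rexp
  refine exp_tendsto.congr' ?_
  filter_upwards [hx.eventually_lt_const one_pos] with i hi
  exact (rpow_def_of_pos (sub_pos.2 hi) _).symm

theorem tendsto_rpow_neg_mul_log_atTop {s : ℝ} (hs : 0 < s) :
    Tendsto (fun t : ℝ => t ^ (-s) * log t) atTop (nhds 0) := by
  refine (isLittleO_log_rpow_atTop hs).tendsto_div_nhds_zero.congr' ?_
  filter_upwards [eventually_ge_atTop 0] with t ht
  rw [rpow_neg ht, div_eq_inv_mul]

theorem eventually_mul_le_sub_mul_log {c : ℝ} (hc : c < 1) (β : ℝ) :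
    ∀ᶠ t : ℝ in atTop, c * t ≤ t - β * log t := by
  have log_isLittleO : (fun t : ℝ => β * log t) =o[atTop] (fun t : ℝ => t) :=
    isLittleO_log_id_atTop.const_mul_left β
  filter_upwards [log_isLittleO.bound (sub_pos.2 hc), eventually_ge_atTop 0] with t hlog ht
  rw [norm_of_nonneg ht] at hlog
  linarith [le_norm_self (β * log t)]

theorem isBigO_one_sub_rpow_sub_mul_log {γ c : ℝ} (hγ : 0 < γ) (hc : 0 ≤ c) (hc_lt_one : c < 1)
    (β : ℝ) {t q : ι → ℝ} (ht : Tendsto t l atTop)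
    (hq : ∀ᶠ i in l, log (t i) / (γ * t i) ≤ q i ∧ q i ≤ 1) :
    (fun i => (1 - q i) ^ (t i - β * log (t i))) =O[l] fun i => t i ^ (-(c / γ)) := by
  refine Asymptotics.IsBigO.of_bound' ?_
  filter_upwards [hq, ht.eventually_ge_atTop 1,
    ht.eventually (eventually_mul_le_sub_mul_log hc_lt_one β)] with i ⟨hq_ge, hq_le⟩ ht hm
  rw [norm_of_nonneg (rpow_nonneg (sub_nonneg.2 hq_le) _)]
  exact (one_sub_rpow_le_rpow_neg_div hγ hc ht hq_ge hq_le hm).trans (le_norm_self _)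

theorem stmt_1_general {γ : ℝ} (hγ : 0 < γ) (α β : ℝ)
    {t q : ι → ℝ} (ht : Tendsto t l atTop)
    (hq : ∀ᶠ i in l, log (t i) / (γ * t i) ≤ q i ∧ q i ≤ 1) :
    Tendsto (fun i => (1 - (1 - q i) ^ (t i - β * log (t i))) ^ (α * log (t i))) l (nhds 1) := by
  have hs : 0 < 1 / 2 / γ := by positivity
  have power_isBigO :=
    isBigO_one_sub_rpow_sub_mul_log hγ one_half_pos.le one_half_lt_one β ht hq
  refine tendsto_one_sub_rpow_nhds_one
    (power_isBigO.trans_tendsto ((tendsto_rpow_neg_atTop hs).comp ht)) ?_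
  have power_mul_log_tendsto :
      Tendsto (fun i => (1 - q i) ^ (t i - β * log (t i)) * log (t i)) l (nhds 0) :=
    (power_isBigO.mul (Asymptotics.isBigO_refl _ l)).trans_tendsto
      ((tendsto_rpow_neg_mul_log_atTop hs).comp ht)
  simpa only [mul_zero, mul_assoc, mul_comm (log _)] using power_mul_log_tendsto.const_mul α

end Limits

theorem stmt_1 (γ α β : ℝ) (hγ : 0 < γ) (hα : 1 < α) (hβ : 1 < β)
    (q : ℕ → ℝ)
    (hq : ∀ n : ℕ, 2 ≤ n → Real.log n / (γ * n) ≤ q n ∧ q n ≤ 1) :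
    Tendsto (fun n : ℕ =>
        (1 - (1 - q n) ^ ((n : ℝ) - β * Real.log n)) ^ (α * Real.log n))
      atTop (nhds 1) :=
  stmt_1_general hγ α β tendsto_natCast_atTop_atTop (eventually_atTop.2 ⟨2, hq⟩)
end

section
/- Let γ > 0 be a real constant, and for each natural number n (large enough that n − 3·log n > 0) set X_n = (1 − √(2·√n/(n − 3·log n)))·(n − 3·log n)·√(log n)/(γ·√n). Then lim_{n→∞} log n · (1 − (1/γ)·√(log n/n))^{X_n²·√(log n)/(2·√n)} = 0. -/
open Real Filter

/-!
Write `L` for `log n` and `N` for `n`. The factor `1 - √(2√N/(N - 3L))` tends to `1`, so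
`X ~ √N √L / γ`. Hence the base `1 - u`, with `u = √(L/N)/γ → 0`, and the exponent `E` satisfy
`u E ~ L²/(2γ³)`, which eventually exceeds `L`, and
`L (1 - u)^E ≤ L exp (-u E) ≤ L exp (-L) → 0`.
-/

open Asymptotics Topology

theorem one_sub_rpow_le_exp_neg_mul_s2 {u E : ℝ} (hu : u ≤ 1) (hE : 0 ≤ E) :
    (1 - u) ^ E ≤ exp (-(u * E)) :=
  calc (1 - u) ^ E ≤ exp (-u) ^ E :=
        rpow_le_rpow (sub_nonneg.2 hu) (one_sub_le_exp_neg u) hE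
    _ = exp (-(u * E)) := by rw [← exp_mul, neg_mul]

section

variable {α : Type*} {l : Filter α} {L N M X D u E f : α → ℝ} {γ κ : ℝ}

theorem tendsto_mul_one_sub_rpow_nhds_zero (hL : Tendsto L l atTop) (hu : ∀ᶠ x in l, u x ≤ 1)
    (hE : ∀ᶠ x in l, 0 ≤ E x) (hLuE : ∀ᶠ x in l, L x ≤ u x * E x) :
    Tendsto (fun x => L x * (1 - u x) ^ E x) l (𝓝 0) := by
  have hexp : Tendsto (fun x => L x * exp (-L x)) l (𝓝 0) := by
    simpa only [pow_one, Function.comp_def] using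
      (tendsto_pow_mul_exp_neg_atTop_nhds_zero 1).comp hL
  refine squeeze_zero' ?_ ?_ hexp
  · filter_upwards [hL.eventually_ge_atTop 0, hu] with x hLx hux
    exact mul_nonneg hLx (rpow_nonneg (sub_nonneg.2 hux) _)
  · filter_upwards [hL.eventually_ge_atTop 0, hu, hE, hLuE] with x hLx hux hEx hLuEx
    gcongr
    exact (one_sub_rpow_le_exp_neg_mul_s2 hux hEx).trans (exp_le_exp.2 (neg_le_neg hLuEx))

theorem eventually_le_of_isEquivalent_sq_div (hL : Tendsto L l atTop) (hκ : 0 < κ)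
    (hf : f ~[l] fun x => L x ^ 2 / κ) : ∀ᶠ x in l, L x ≤ f x := by
  have hquot : (fun x => f x / L x) ~[l] fun x => L x / κ := by
    refine (hf.div IsEquivalent.refl).trans_eventuallyEq (.of_forall fun x => ?_)
    calc L x ^ 2 / κ / L x = L x ^ 2 / L x / κ := div_right_comm _ _ _
      _ = L x / κ := by rw [sq, mul_self_div_self]
  have htop : Tendsto (fun x => f x / L x) l atTop :=
    hquot.symm.tendsto_atTop (hL.atTop_div_const hκ)
  filter_upwards [htop.eventually_ge_atTop 1, hL.eventually_gt_atTop 0] with x hx hLx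
  exact (one_le_div hLx).1 hx

theorem isEquivalent_sqrt_div_mul_exponent (hN : Tendsto N l atTop) (hL : Tendsto L l atTop)
    (hX : X ~[l] fun x => √(N x) * √(L x) / γ) :
    (fun x => 1 / γ * √(L x / N x) * (X x ^ 2 * √(L x) / (2 * √(N x)))) ~[l]
      fun x => L x ^ 2 / (2 * γ ^ 3) := by
  have hsubst := (IsEquivalent.refl (u := fun x => 1 / γ * √(L x / N x)) (l := l)).mul
    (((hX.pow 2).mul (IsEquivalent.refl (u := fun x => √(L x)))).div
      (IsEquivalent.refl (u := fun x => 2 * √(N x))))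
  refine hsubst.trans_eventuallyEq ?_
  filter_upwards [hN.eventually_gt_atTop 0, hL.eventually_ge_atTop 0] with x hNx hLx
  have hsqrtL : √(L x) ^ 4 = L x ^ 2 := by rw [pow_mul (√(L x)) 2 2, sq_sqrt hLx]
  have hsqrtN : √(N x) ≠ 0 := (sqrt_pos.2 hNx).ne'
  simp only [Pi.mul_apply, Pi.div_apply, Pi.pow_apply, sqrt_div hLx, ← hsqrtL]
  field_simp

theorem tendsto_mul_one_sub_sqrt_div_rpow_nhds_zero (hγ : 0 < γ) (hN : Tendsto N l atTop)
    (hL : Tendsto L l atTop) (hLN : L =o[l] N) (hX : X ~[l] fun x => √(N x) * √(L x) / γ) :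
    Tendsto (fun x => L x * (1 - 1 / γ * √(L x / N x)) ^ (X x ^ 2 * √(L x) / (2 * √(N x))))
      l (𝓝 0) := by
  have hbase : Tendsto (fun x => 1 / γ * √(L x / N x)) l (𝓝 0) := by
    simpa only [sqrt_zero, mul_zero] using hLN.tendsto_div_nhds_zero.sqrt.const_mul (1 / γ)
  exact tendsto_mul_one_sub_rpow_nhds_zero hL (hbase.eventually_le_const one_pos)
    (.of_forall fun x => by positivity)
    (eventually_le_of_isEquivalent_sq_div hL (by positivity)
      (isEquivalent_sqrt_div_mul_exponent hN hL hX))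

theorem tendsto_sqrt_div_nhds_zero (hN : Tendsto N l atTop) (hD : D ~[l] N) :
    Tendsto (fun x => √(N x) / D x) l (𝓝 0) := by
  have hquot : (fun x => √(N x) / D x) ~[l] fun x => (√(N x))⁻¹ := by
    refine (IsEquivalent.refl.div hD).trans_eventuallyEq (.of_forall fun x => ?_)
    exact sqrt_div_self'.trans (one_div _)
  exact hquot.symm.tendsto_nhds (tendsto_sqrt_atTop.comp hN).inv_tendsto_atTop

theorem isEquivalent_one_sub_sqrt_mul (c : ℝ) (hN : Tendsto N l atTop) (hD : D ~[l] N) :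
    (fun x => (1 - √(c * √(N x) / D x)) * D x) ~[l] N := by
  have hfactor : Tendsto (fun x => 1 - √(c * √(N x) / D x)) l (𝓝 1) := by
    simpa only [mul_zero, sqrt_zero, sub_zero, mul_div_assoc] using
      ((tendsto_sqrt_div_nhds_zero hN hD).const_mul c).sqrt.const_sub 1
  simpa only [Pi.mul_def, Function.const_apply, one_mul] using
    ((isEquivalent_const_iff_tendsto one_ne_zero).2 hfactor).mul hD

theorem isEquivalent_sqrt_mul_sqrt_div (hM : M ~[l] N) :
    (fun x => M x * √(L x) / (γ * √(N x))) ~[l] fun x => √(N x) * √(L x) / γ := by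
  have hsubst := (hM.mul (IsEquivalent.refl (u := fun x => √(L x)))).div
    (IsEquivalent.refl (u := fun x => γ * √(N x)))
  refine hsubst.trans_eventuallyEq (.of_forall fun x => ?_)
  calc N x * √(L x) / (γ * √(N x)) = N x / √(N x) * √(L x) / γ := by ring
    _ = √(N x) * √(L x) / γ := by rw [div_sqrt]

theorem stmt_2_general (hγ : 0 < γ) (hN : Tendsto N l atTop) (hL : Tendsto L l atTop)
    (hLN : L =o[l] N)
    (hX : ∀ x, X x =
      (1 - √(2 * √(N x) / (N x - 3 * L x))) * (N x - 3 * L x) * √(L x) / (γ * √(N x))) :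
    Tendsto (fun x => L x * (1 - 1 / γ * √(L x / N x)) ^ (X x ^ 2 * √(L x) / (2 * √(N x))))
      l (𝓝 0) := by
  have hD : (fun x => N x - 3 * L x) ~[l] N :=
    IsEquivalent.refl.sub_isLittleO (hLN.const_mul_left 3)
  refine tendsto_mul_one_sub_sqrt_div_rpow_nhds_zero hγ hN hL hLN ?_
  rw [funext hX]
  exact isEquivalent_sqrt_mul_sqrt_div (isEquivalent_one_sub_sqrt_mul 2 hN hD)

end

theorem stmt_2 (γ : ℝ) (hγ : 0 < γ)
    (X : ℕ → ℝ)
    (hX : ∀ n : ℕ, X n =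
      (1 - Real.sqrt (2 * Real.sqrt n / ((n : ℝ) - 3 * Real.log n))) *
        ((n : ℝ) - 3 * Real.log n) * Real.sqrt (Real.log n) / (γ * Real.sqrt n)) :
    Tendsto (fun n : ℕ =>
        Real.log n *
          (1 - (1 / γ) * Real.sqrt (Real.log n / n)) ^
            ((X n) ^ 2 * Real.sqrt (Real.log n) / (2 * Real.sqrt n)))
      atTop (nhds 0) :=
  stmt_2_general hγ tendsto_natCast_atTop_atTop
    (tendsto_log_atTop.comp tendsto_natCast_atTop_atTop)
    (isLittleO_log_id_atTop.comp_tendsto tendsto_natCast_atTop_atTop) hX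
end

section
/- Define f(x) = (2 − e^{(1 − 1/x)·(1 − e^{−x/2})})·x for real x > 0, and set a = (1 − f(1/5))/0.8 and b = 1 − a. Then for all real x with 1/5 < x < 1, f(x) ≥ a·x + b. -/
open Real

noncomputable def fHC (x : ℝ) : ℝ :=
  (2 - Real.exp ((1 - 1 / x) * (1 - Real.exp (-x / 2)))) * x

/-!
For a fixed rate `s`, the function `x ↦ x * exp ((1 - 1 / x) * s)` is a slice of the perspective of
`exp`, hence convex on `(0, ∞)`, with value `1` at `x = 1`. Now `fHC x` is `2 * x` minus this
function at the increasing rate `s = 1 - exp (-x / 2)`. Freezing the rate at its value at a point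
`c < x < 1` can only decrease `fHC x`, because `1 - 1 / x ≤ 0`, and leaves a concave function
agreeing with `fHC` at `c` and at `1`, which lies above its chord.
-/

section Perspective

variable {𝕜 E : Type*} [Field 𝕜] [AddCommGroup E] [Module 𝕜 E]

theorem inv_smul_add_smul_eq {t u : 𝕜} (ht : t ≠ 0) (hu : u ≠ 0) (r α β : 𝕜) (v w : E) :
    r⁻¹ • (α • v + β • w) = (α * t / r) • t⁻¹ • v + (β * u / r) • u⁻¹ • w := by
  simp only [smul_add, smul_smul]
  congr 2 <;> field_simp

variable [LinearOrder 𝕜] [IsStrictOrderedRing 𝕜] {S : Set E}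

theorem convex_perspective_domain (hS : Convex 𝕜 S) :
    Convex 𝕜 {p : 𝕜 × E | 0 < p.1 ∧ p.1⁻¹ • p.2 ∈ S} := by
  rintro ⟨t, v⟩ ⟨ht : 0 < t, hv : t⁻¹ • v ∈ S⟩ ⟨u, w⟩ ⟨hu : 0 < u, hw : u⁻¹ • w ∈ S⟩
    α β hα hβ hαβ
  have hr : 0 < α * t + β * u := convex_Ioi (0 : 𝕜) ht hu hα hβ hαβ
  refine ⟨hr, ?_⟩
  change (α * t + β * u)⁻¹ • (α • v + β • w) ∈ S
  rw [inv_smul_add_smul_eq ht.ne' hu.ne']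
  exact hS hv hw (by positivity) (by positivity) (by rw [← add_div, div_self hr.ne'])

theorem convexOn_perspective {φ : E → 𝕜} (hφ : ConvexOn 𝕜 S φ) :
    ConvexOn 𝕜 {p : 𝕜 × E | 0 < p.1 ∧ p.1⁻¹ • p.2 ∈ S} fun p ↦ p.1 * φ (p.1⁻¹ • p.2) := by
  refine ⟨convex_perspective_domain hφ.1, ?_⟩
  rintro ⟨t, v⟩ ⟨ht : 0 < t, hv : t⁻¹ • v ∈ S⟩ ⟨u, w⟩ ⟨hu : 0 < u, hw : u⁻¹ • w ∈ S⟩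
    α β hα hβ hαβ
  set r := α * t + β * u
  have hr : 0 < r := convex_Ioi (0 : 𝕜) ht hu hα hβ hαβ
  have weights_sum : α * t / r + β * u / r = 1 := by rw [← add_div, div_self hr.ne']
  calc
    r * φ (r⁻¹ • (α • v + β • w))
      = r * φ ((α * t / r) • t⁻¹ • v + (β * u / r) • u⁻¹ • w) := by
        rw [inv_smul_add_smul_eq ht.ne' hu.ne']
    _ ≤ r * (α * t / r * φ (t⁻¹ • v) + β * u / r * φ (u⁻¹ • w)) :=
        mul_le_mul_of_nonneg_left
          (hφ.2 hv hw (by positivity) (by positivity) weights_sum) hr.le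
    _ = α * (t * φ (t⁻¹ • v)) + β * (u * φ (u⁻¹ • w)) := by field_simp

end Perspective

/-- The slice `x ↦ x * exp ((1 - 1 / x) * s)` of the perspective of `exp`, with rate `s`; the
function `fHC` is built from it by letting `s` depend on `x`. At `x = 0` it is `0`. -/
noncomputable def expSlice (s x : ℝ) : ℝ :=
  x * exp ((1 - 1 / x) * s)

theorem expSlice_one (s : ℝ) : expSlice s 1 = 1 := by
  simp [expSlice]

theorem convexOn_expSlice (s : ℝ) : ConvexOn ℝ (Set.Ioi 0) (expSlice s) := by
  let line : ℝ →ᵃ[ℝ] ℝ × ℝ := AffineMap.lineMap (0, -s) (1, 0)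
  have line_apply (x : ℝ) : line x = (x, (x - 1) * s) := by
    simp only [line, AffineMap.lineMap_apply_module, Prod.smul_mk, Prod.mk_add_mk, smul_eq_mul]
    ext <;> ring
  have hconv := (convexOn_perspective convexOn_exp).comp_affineMap line
  refine (hconv.subset ?_ (convex_Ioi 0)).congr ?_
  · intro x (hx : 0 < x)
    simpa [line_apply] using hx
  · intro x (hx : 0 < x)
    simp only [Function.comp_apply, line_apply, expSlice, smul_eq_mul]
    congr 2
    field_simp

theorem antitone_expSlice_rate {x : ℝ} (hx₀ : 0 < x) (hx₁ : x ≤ 1) :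
    Antitone fun s ↦ expSlice s x := by
  intro s t hst
  have hcoeff : 1 - 1 / x ≤ 0 := sub_nonpos.2 (one_le_one_div hx₀ hx₁)
  exact mul_le_mul_of_nonneg_left
    (exp_le_exp.2 (mul_le_mul_of_nonpos_left hst hcoeff)) hx₀.le

theorem expSlice_le_chord {s t c x : ℝ} (hst : s ≤ t) (hc : 0 < c) (hcx : c < x) (hx : x < 1) :
    (1 - c) * expSlice t x ≤ (1 - x) * expSlice s c + (x - c) :=
  calc
    (1 - c) * expSlice t x ≤ (1 - c) * expSlice s x :=
      mul_le_mul_of_nonneg_left (antitone_expSlice_rate (hc.trans hcx) hx.le hst)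
        (sub_nonneg.2 (hcx.trans hx).le)
    _ ≤ (1 - x) * expSlice s c + (x - c) * expSlice s 1 :=
      (convexOn_expSlice s).secant_mono_aux1 hc (Set.mem_Ioi.2 one_pos) hcx hx
    _ = (1 - x) * expSlice s c + (x - c) := by rw [expSlice_one, mul_one]

theorem fHC_eq_sub_expSlice (x : ℝ) : fHC x = 2 * x - expSlice (1 - exp (-x / 2)) x := by
  unfold fHC expSlice
  ring

theorem stmt_15_general {a c x : ℝ} (hc : 0 < c) (ha : a = (1 - fHC c) / (1 - c))
    (hcx : c < x) (hx : x < 1) : a * x + (1 - a) ≤ fHC x := by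
  have hc₁ : 0 < 1 - c := sub_pos.2 (hcx.trans hx)
  have rate_le : 1 - exp (-c / 2) ≤ 1 - exp (-x / 2) := by gcongr
  have chord := expSlice_le_chord rate_le hc hcx hx
  have slope : (1 - c) * a = 1 - fHC c := by rw [ha, mul_div_cancel₀ _ hc₁.ne']
  refine le_of_mul_le_mul_left ?_ hc₁
  calc
    (1 - c) * (a * x + (1 - a)) = (1 - c) - (1 - x) * ((1 - c) * a) := by ring
    _ = (1 - c) * (2 * x) - ((1 - x) * expSlice (1 - exp (-c / 2)) c + (x - c)) := by
      rw [slope, fHC_eq_sub_expSlice]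
      ring
    _ ≤ (1 - c) * (2 * x) - (1 - c) * expSlice (1 - exp (-x / 2)) x := by gcongr
    _ = (1 - c) * fHC x := by rw [fHC_eq_sub_expSlice, mul_sub]

theorem stmt_15 (a b : ℝ) (ha : a = (1 - fHC (1 / 5)) / 0.8) (hb : b = 1 - a) :
    ∀ x : ℝ, 1 / 5 < x → x < 1 → fHC x ≥ a * x + b := by
  intro x hcx hx
  rw [hb]
  exact stmt_15_general (by norm_num) (ha.trans (by norm_num)) hcx hx
end
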